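/- Let α ∈ (0,1), let (α_n) be a sequence in (0,1) with n·α_n → α as n → ∞, and let c_n be defined by Φ(−c_n) = α_n. Then c_n → ∞ and c_n²/(2·log n) → 1 as n → ∞. -/

import Mathlib

open MeasureTheory Filter

/-- The standard normal density. -/
noncomputable def phi (x : ℝ) : ℝ := (Real.sqrt (2 * Real.pi))⁻¹ * Real.exp (-x ^ 2 / 2)

/-- The standard normal cumulative distribution function. -/
noncomputable def Phi (x : ℝ) : ℝ := ∫ t in Set.Iic x, phi t

/-- d(ρ,c,z) = (c + √ρ·z)/√(1−ρ). -/
noncomputable def dd (ρ c z : ℝ) : ℝ := (c + Real.sqrt ρ * z) / Real.sqrt (1 - ρ)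

/-- G(ρ,c,z) = (c + z/√ρ)/(2(1−ρ)^{3/2}). -/
noncomputable def G (ρ c z : ℝ) : ℝ :=
  (c + z / Real.sqrt ρ) / (2 * (1 - ρ) ^ ((3 : ℝ) / 2))

/-- H_n(ρ,c) = ∫ Φ(d(ρ,c,z))^n φ(z) dz. -/
noncomputable def Hn (n : ℕ) (ρ c : ℝ) : ℝ := ∫ z : ℝ, (Phi (dd ρ c z)) ^ n * phi z

/-!
On a logarithmic scale the lower tail of the normal distribution is `log Φ(x) ~ -x² / 2` as
`x → -∞`: the upper bound is Chernoff's inequality, and the lower bound integrates the density over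
an interval of length one. Along `x = -cₙ` this reads `log αₙ ~ -cₙ² / 2`, while the convergence of
`n αₙ` to a nonzero limit gives `log αₙ ~ -log n`.
-/

open Asymptotics ProbabilityTheory Topology

section ReciprocalDecay

variable {ι : Type*} {l : Filter ι} {f u : ι → ℝ} {a : ℝ}

lemma tendsto_zero_of_tendsto_mul (hf : Tendsto f l atTop)
    (hfu : Tendsto (fun i ↦ f i * u i) l (𝓝 a)) : Tendsto u l (𝓝 0) := by
  refine (hfu.div_atTop hf).congr' ?_
  filter_upwards [hf.eventually_ne_atTop 0] with i hi
  exact mul_div_cancel_left₀ _ hi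

lemma isEquivalent_log_of_tendsto_mul (hf : Tendsto f l atTop) (ha : a ≠ 0)
    (hfu : Tendsto (fun i ↦ f i * u i) l (𝓝 a)) :
    (fun i ↦ Real.log (u i)) ~[l] fun i ↦ -Real.log (f i) := by
  have hlog : Tendsto (fun i ↦ Real.log (f i)) l atTop := Real.tendsto_log_atTop.comp hf
  have hlogmul : (fun i ↦ Real.log (f i * u i)) =o[l] fun i ↦ -Real.log (f i) :=
    ((hfu.log ha).isBigO_one ℝ).trans_isLittleO
      ((isLittleO_one_left_iff ℝ).mpr (tendsto_abs_atTop_atTop.comp hlog)).neg_right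
  refine IsLittleO.isEquivalent (hlogmul.congr' ?_ .rfl)
  filter_upwards [hf.eventually_ne_atTop 0, hfu.eventually_ne ha] with i hfi hfui
  rw [Real.log_mul hfi (right_ne_zero_of_mul hfui), Pi.sub_apply]
  ring

end ReciprocalDecay

lemma phi_eq_gaussianPDFReal : phi = gaussianPDFReal 0 1 := by
  ext x
  simp [phi, gaussianPDFReal]

lemma phi_pos (x : ℝ) : 0 < phi x := by
  unfold phi; positivity

lemma integrable_phi : Integrable phi :=
  phi_eq_gaussianPDFReal ▸ integrable_gaussianPDFReal 0 1

lemma phi_monotoneOn_Iic : MonotoneOn phi (Set.Iic 0) := by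
  intro x _ y (hy : y ≤ 0) hxy
  have hsq : y ^ 2 ≤ x ^ 2 := by nlinarith
  unfold phi
  gcongr

lemma log_phi (x : ℝ) : Real.log (phi x) = -x ^ 2 / 2 - Real.log √(2 * Real.pi) := by
  rw [phi, Real.log_mul (by positivity) (Real.exp_ne_zero _), Real.log_inv, Real.log_exp]
  ring

lemma Phi_eq_measureReal_Iic (x : ℝ) : Phi x = (gaussianReal 0 1).real (Set.Iic x) := by
  rw [measureReal_def, gaussianReal_apply_eq_integral 0 one_ne_zero, ← phi_eq_gaussianPDFReal,
    ENNReal.toReal_ofReal (integral_nonneg fun t ↦ (phi_pos t).le), Phi]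

lemma Phi_monotone : Monotone Phi := by
  intro x y hxy
  simp only [Phi_eq_measureReal_Iic]
  exact measureReal_mono (Set.Iic_subset_Iic.mpr hxy)

lemma mul_phi_sub_le_Phi {x δ : ℝ} (hx : x ≤ 0) (hδ : 0 ≤ δ) : δ * phi (x - δ) ≤ Phi x :=
  calc δ * phi (x - δ) = ∫ _ in Set.Icc (x - δ) x, phi (x - δ) := by simp [hδ]
    _ ≤ ∫ t in Set.Icc (x - δ) x, phi t :=
      setIntegral_mono_on (by simp) integrable_phi.integrableOn measurableSet_Icc fun t ht ↦
        phi_monotoneOn_Iic (sub_nonpos.mpr (hx.trans hδ)) (ht.2.trans hx) ht.1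
    _ ≤ Phi x :=
      setIntegral_mono_set integrable_phi.integrableOn (ae_of_all _ fun t ↦ (phi_pos t).le)
        Set.Icc_subset_Iic_self.eventuallyLE

lemma Phi_pos (x : ℝ) : 0 < Phi x :=
  calc 0 < 1 * phi (-|x| - 1) := by simpa using phi_pos _
    _ ≤ Phi (-|x|) := mul_phi_sub_le_Phi (by simp) zero_le_one
    _ ≤ Phi x := Phi_monotone (neg_abs_le x)

lemma Phi_le_exp {x : ℝ} (hx : x ≤ 0) : Phi x ≤ Real.exp (-x ^ 2 / 2) :=
  calc Phi x = (gaussianReal 0 1).real {t | id t ≤ x} := Phi_eq_measureReal_Iic x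
    _ ≤ Real.exp (-x * x) * mgf id (gaussianReal 0 1) x :=
      measure_le_le_exp_mul_mgf x hx (integrable_exp_mul_gaussianReal x)
    _ = Real.exp (-x ^ 2 / 2) := by
      rw [mgf_id_gaussianReal, ← Real.exp_add]
      congr 1
      push_cast
      ring

lemma abs_log_Phi_add_sq_div_two_le {x : ℝ} (hx : x ≤ 0) :
    |Real.log (Phi x) + x ^ 2 / 2| ≤ |x| + (1 / 2 + |Real.log √(2 * Real.pi)|) := by
  have hupper : Real.log (Phi x) ≤ -x ^ 2 / 2 :=
    (Real.log_le_iff_le_exp (Phi_pos x)).mpr (Phi_le_exp hx)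
  have hlower : Real.log (phi (x - 1)) ≤ Real.log (Phi x) :=
    Real.log_le_log (phi_pos _) (by simpa using mul_phi_sub_le_Phi hx zero_le_one)
  rw [log_phi] at hlower
  rw [abs_of_nonpos (by linarith), abs_of_nonpos hx]
  linarith [le_abs_self (Real.log √(2 * Real.pi))]

theorem isEquivalent_log_Phi_atBot :
    (fun x ↦ Real.log (Phi x)) ~[atBot] fun x ↦ -x ^ 2 / 2 := by
  have hlinear (C : ℝ) : (fun y : ℝ ↦ y + C) =o[atTop] fun y ↦ y ^ 2 := by
    have hid : (fun y : ℝ ↦ y) =o[atTop] fun y ↦ y ^ 2 := by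
      simpa only [pow_one] using isLittleO_pow_pow_atTop_of_lt (𝕜 := ℝ) one_lt_two
    exact hid.add ((isLittleO_const_id_atTop C).trans hid)
  have hbound : (fun x : ℝ ↦ |x| + (1 / 2 + |Real.log √(2 * Real.pi)|)) =o[atBot]
      fun x ↦ -x ^ 2 / 2 := by
    have hsq : (fun x : ℝ ↦ |x| ^ 2) =O[atBot] fun x ↦ -x ^ 2 / 2 :=
      .of_bound 2 (.of_forall fun x ↦ by simp [mul_div_cancel₀])
    exact ((hlinear _).comp_tendsto tendsto_abs_atBot_atTop).trans_isBigO hsq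
  refine IsLittleO.isEquivalent (IsBigO.trans_isLittleO (.of_bound 1 ?_) hbound)
  filter_upwards [eventually_le_atBot 0] with x hx
  simpa [neg_div] using (abs_log_Phi_add_sq_div_two_le hx).trans (le_abs_self _)

lemma tendsto_atBot_of_tendsto_Phi {ι : Type*} {l : Filter ι} {x : ι → ℝ}
    (h : Tendsto (fun i ↦ Phi (x i)) l (𝓝 0)) : Tendsto x l atBot := by
  refine tendsto_atBot.mpr fun b ↦ ?_
  filter_upwards [h.eventually_lt_const (Phi_pos b)] with i hi
  exact (Phi_monotone.reflect_lt hi).le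

theorem cn_tendsto_atTop_and_sq_div_log_general {ι : Type*} {l : Filter ι} {f αseq c : ι → ℝ}
    {α : ℝ} (hα : α ≠ 0) (hf : Tendsto f l atTop)
    (hlim : Tendsto (fun i ↦ f i * αseq i) l (𝓝 α)) (hc : ∀ i, Phi (-c i) = αseq i) :
    Tendsto c l atTop ∧ Tendsto (fun i ↦ c i ^ 2 / (2 * Real.log (f i))) l (𝓝 1) := by
  have hbot : Tendsto (fun i ↦ -c i) l atBot :=
    tendsto_atBot_of_tendsto_Phi (by simpa only [hc] using tendsto_zero_of_tendsto_mul hf hlim)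
  have htail : (fun i ↦ Real.log (αseq i)) ~[l] fun i ↦ -(-c i) ^ 2 / 2 := by
    simpa only [Function.comp_def, hc] using isEquivalent_log_Phi_atBot.comp_tendsto hbot
  have hequiv : (fun i ↦ -(-c i) ^ 2 / 2) ~[l] fun i ↦ -Real.log (f i) :=
    htail.symm.trans (isEquivalent_log_of_tendsto_mul hf hα hlim)
  have hlog : ∀ᶠ i in l, -Real.log (f i) ≠ 0 :=
    ((Real.tendsto_log_atTop.comp hf).eventually_ne_atTop 0).mono fun _ ↦ neg_ne_zero.mpr
  refine ⟨tendsto_neg_atBot_iff.mp hbot,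
    ((isEquivalent_iff_tendsto_one hlog).mp hequiv).congr fun i ↦ ?_⟩
  rw [Pi.div_apply, neg_div, neg_div_neg_eq, div_div, neg_sq]

theorem cn_tendsto_atTop_and_sq_div_log
    (α : ℝ) (hα : α ∈ Set.Ioo (0:ℝ) 1)
    (αseq : ℕ → ℝ) (hαseq : ∀ n, αseq n ∈ Set.Ioo (0:ℝ) 1)
    (hlim : Tendsto (fun n : ℕ => (n : ℝ) * αseq n) atTop (nhds α))
    (c : ℕ → ℝ) (hc : ∀ n, Phi (-(c n)) = αseq n) :
    Tendsto c atTop atTop ∧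
      Tendsto (fun n : ℕ => (c n) ^ 2 / (2 * Real.log n)) atTop (nhds 1) :=
  cn_tendsto_atTop_and_sq_div_log_general hα.1.ne' tendsto_natCast_atTop_atTop hlim hc
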